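/- Let ρ ∈ (−1, 1), σ_X > 0, σ_Y > 0 and n ≥ 1. For i = 1, …, n let Xᵢ and Vᵢ be independent standard normal random variables (all 2n variables mutually independent), set Yᵢ = ρXᵢ + √(1 − ρ²)Vᵢ, and let Z̄ = (1/n) Σ_{i=1}^n (σ_X Xᵢ)(σ_Y Yᵢ). Then the law of Z̄ is absolutely continuous with respect to Lebesgue measure, with density p(x) = (n^{(n+1)/2} 2^{(1−n)/2} |x|^{(n−1)/2}) / ((σ_X σ_Y)^{(n+1)/2} √(π(1 − ρ²)) Γ(n/2)) · exp(ρ n x/(σ_X σ_Y (1 − ρ²))) · K_{(n−1)/2}(n|x|/(σ_X σ_Y (1 − ρ²))) for x ≠ 0, where K_ν(y) = ∫₀^∞ e^{−y cosh t} cosh(νt) dt. -/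

import Mathlib

open MeasureTheory ProbabilityTheory

/-- The modified Bessel function of the second kind,
`K_ν(y) = ∫₀^∞ e^{−y cosh t} cosh(νt) dt`. -/
noncomputable def besselK (ν y : ℝ) : ℝ :=
  ∫ t in Set.Ioi (0 : ℝ), Real.exp (-(y * Real.cosh t)) * Real.cosh (ν * t)

/-- Polar coordinates for the lower Lebesgue integral of a radial function. -/
theorem lintegral_fun_norm_addHaar {E : Type*} [NormedAddCommGroup E] [NormedSpace ℝ E]
    [Nontrivial E] [FiniteDimensional ℝ E] [MeasurableSpace E] [BorelSpace E]
    (μ : Measure E) [μ.IsAddHaarMeasure] {f : ℝ → ENNReal} (hf : Measurable f) :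
    ∫⁻ x, f ‖x‖ ∂μ = Module.finrank ℝ E * μ (Metric.ball 0 1) *
      ∫⁻ r in Set.Ioi (0 : ℝ), ENNReal.ofReal (r ^ (Module.finrank ℝ E - 1)) * f r :=
  calc
    ∫⁻ x, f ‖x‖ ∂μ = ∫⁻ x : ({(0)}ᶜ : Set E), f ‖x.1‖ ∂(μ.comap (↑)) := by
      rw [lintegral_subtype_comap (measurableSet_singleton _).compl fun x ↦ f ‖x‖,
        restrict_compl_singleton]
    _ = ∫⁻ x, f x.2 ∂μ.toSphere.prod (.volumeIoiPow (Module.finrank ℝ E - 1)) := by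
      simpa using μ.measurePreserving_homeomorphUnitSphereProd.lintegral_comp_emb
        (Homeomorph.measurableEmbedding _) (f ∘ Subtype.val ∘ Prod.snd)
    _ = μ.toSphere Set.univ *
        ∫⁻ r : Set.Ioi (0 : ℝ), f r ∂.volumeIoiPow (Module.finrank ℝ E - 1) := by
      rw [lintegral_prod _ (by fun_prop)]
      simp [mul_comm]
    _ = _ := by
      rw [Measure.volumeIoiPow, lintegral_withDensity_eq_lintegral_mul _ (by fun_prop)
        (by fun_prop), μ.toSphere_apply_univ]
      simp only [Pi.mul_apply]
      rw [lintegral_subtype_comap measurableSet_Ioi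
        fun r : ℝ ↦ ENNReal.ofReal (r ^ (Module.finrank ℝ E - 1)) * f r]

/-- A finite product of standard normal laws has the product density. -/
theorem pi_gaussianReal_eq_withDensity (ι : Type*) [Fintype ι] :
    Measure.pi (fun _ : ι ↦ gaussianReal 0 1) =
      volume.withDensity (fun x ↦ ∏ i, gaussianPDF 0 1 (x i)) := by
  refine Measure.pi_eq (μ := fun _ : ι ↦ gaussianReal 0 1) fun s hs ↦ ?_
  have hint (i : ι) : Integrable (gaussianPDFReal 0 1) (volume.restrict (s i)) :=
    (integrable_gaussianPDFReal 0 1).restrict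
  have hbox := integral_fintype_prod_eq_prod (𝕜 := ℝ) (fun _ : ι ↦ gaussianPDFReal 0 1)
    (μ := fun i ↦ volume.restrict (s i))
  rw [withDensity_apply _ (.univ_pi hs), volume_pi, Measure.restrict_pi_pi]
  simp_rw [gaussianPDF, ← ENNReal.ofReal_prod_of_nonneg
    fun i _ ↦ gaussianPDFReal_nonneg 0 1 _]
  rw [← ofReal_integral_eq_lintegral_ofReal (Integrable.fintype_prod hint)
    (.of_forall fun x ↦ Finset.prod_nonneg fun i _ ↦ gaussianPDFReal_nonneg 0 1 _), hbox,
    ENNReal.ofReal_prod_of_nonneg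
      fun i _ ↦ integral_nonneg fun x ↦ gaussianPDFReal_nonneg 0 1 x]
  exact Finset.prod_congr rfl fun i _ ↦ (gaussianReal_apply_eq_integral 0 one_ne_zero _).symm

/-- The density of the standard Gaussian measure on `ℝⁿ`. -/
theorem stdGaussian_eq_withDensity (ι : Type*) [Fintype ι] :
    stdGaussian (EuclideanSpace ℝ ι) = volume.withDensity fun x ↦
      ENNReal.ofReal ((√(2 * Real.pi))⁻¹ ^ Fintype.card ι * Real.exp (-‖x‖ ^ 2 / 2)) := by
  have hprod (x : ι → ℝ) : ∏ i, gaussianPDF 0 1 (x i) = ENNReal.ofReal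
      ((√(2 * Real.pi))⁻¹ ^ Fintype.card ι * Real.exp (-‖WithLp.toLp 2 x‖ ^ 2 / 2)) := by
    simp_rw [gaussianPDF, ← ENNReal.ofReal_prod_of_nonneg
      fun i _ ↦ gaussianPDFReal_nonneg 0 1 _]
    simp [gaussianPDFReal, Finset.prod_mul_distrib, ← Real.exp_sum,
      EuclideanSpace.real_norm_sq_eq, ← Finset.sum_div]
  rw [← map_pi_eq_stdGaussian, pi_gaussianReal_eq_withDensity]
  simp_rw [hprod]
  ext s hs
  have hm : Measurable (WithLp.toLp 2 : (ι → ℝ) → EuclideanSpace ℝ ι) := by fun_prop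
  rw [Measure.map_apply hm hs, withDensity_apply _ hs, withDensity_apply _ (hm hs),
    ← (PiLp.volume_preserving_toLp ι).map_eq, setLIntegral_map hs (by fun_prop) hm]

/-- A linear functional of a standard Gaussian vector, shifted by a constant. -/
theorem stdGaussian_map_const_add_inner {E : Type*} [NormedAddCommGroup E]
    [InnerProductSpace ℝ E] [FiniteDimensional ℝ E] [MeasurableSpace E] [BorelSpace E]
    (m : ℝ) (a : E) :
    (stdGaussian E).map (fun v ↦ m + inner ℝ a v) = gaussianReal m (‖a‖₊ ^ 2) := by
  have hlin : (stdGaussian E).map (innerSL ℝ a) = gaussianReal 0 (‖a‖₊ ^ 2) := by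
    rw [IsGaussian.map_eq_gaussianReal, integral_strongDual_stdGaussian,
      variance_dual_stdGaussian, innerSL_apply_norm]
    congr 1
    ext
    simp
  have hadd := gaussianReal_map_const_add (μ := 0) (v := ‖a‖₊ ^ 2) m
  rw [← hlin, Measure.map_map (by fun_prop) (by fun_prop), zero_add] at hadd
  exact hadd

/-- Conditionally on the first vector, `a * ‖x‖ ^ 2 + b * ⟪x, v⟫` is Gaussian. -/
theorem lintegral_prod_stdGaussian_norm_sq_add_inner {E : Type*} [NormedAddCommGroup E]
    [InnerProductSpace ℝ E] [FiniteDimensional ℝ E] [MeasurableSpace E] [BorelSpace E]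
    (a b : ℝ) {g : ℝ → ENNReal} (hg : Measurable g) :
    ∫⁻ p, g (a * ‖p.1‖ ^ 2 + b * inner ℝ p.1 p.2) ∂(stdGaussian E).prod (stdGaussian E) =
      ∫⁻ x, ∫⁻ z, g z ∂gaussianReal (a * ‖x‖ ^ 2) ((‖b‖₊ * ‖x‖₊) ^ 2) ∂stdGaussian E := by
  rw [lintegral_prod _ (by fun_prop)]
  refine lintegral_congr fun x ↦ ?_
  rw [← nnnorm_smul, ← stdGaussian_map_const_add_inner, lintegral_map hg (by fun_prop)]
  simp only [real_inner_smul_left]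

/-- The law of `a * ‖x‖ ^ 2 + b * ⟪x, v⟫` for independent standard Gaussian vectors `x`, `v`,
as a mixture over the norm of `x`. -/
theorem map_prod_stdGaussian_norm_sq_add_inner (ι : Type*) [Fintype ι] [Nonempty ι]
    (a : ℝ) {b : ℝ} (hb : 0 < b) :
    ((stdGaussian (EuclideanSpace ℝ ι)).prod (stdGaussian (EuclideanSpace ℝ ι))).map
        (fun p ↦ a * ‖p.1‖ ^ 2 + b * inner ℝ p.1 p.2) =
      volume.withDensity fun z ↦ ENNReal.ofReal
          (Fintype.card ι * (√Real.pi ^ Fintype.card ι / Real.Gamma (Fintype.card ι / 2 + 1))) *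
        ∫⁻ r in Set.Ioi (0 : ℝ), ENNReal.ofReal (r ^ (Fintype.card ι - 1) *
          ((√(2 * Real.pi))⁻¹ ^ Fintype.card ι * Real.exp (-r ^ 2 / 2)) *
          gaussianPDFReal (a * r ^ 2) (Real.toNNReal ((b * r) ^ 2)) z) := by
  set N := Fintype.card ι with hN
  have hpdf : Measurable fun p : ℝ × ℝ ↦
      gaussianPDFReal (a * p.1 ^ 2) (Real.toNNReal ((b * p.1) ^ 2)) p.2 :=
    measurable_uncurry_gaussianPDFReal.comp
      (f := fun p : ℝ × ℝ ↦ (a * p.1 ^ 2, Real.toNNReal ((b * p.1) ^ 2), p.2)) (by fun_prop)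
  have hball : (Module.finrank ℝ (EuclideanSpace ℝ ι) : ENNReal) *
      volume (Metric.ball (0 : EuclideanSpace ℝ ι) 1) =
      ENNReal.ofReal (N * (√Real.pi ^ N / Real.Gamma (N / 2 + 1))) := by
    rw [EuclideanSpace.volume_ball, finrank_euclideanSpace, ENNReal.ofReal_mul (by positivity),
      ENNReal.ofReal_natCast]
    simp [hN]
  set w : ℝ → ℝ := fun r ↦ (√(2 * Real.pi))⁻¹ ^ N * Real.exp (-r ^ 2 / 2)
  have hwm : Measurable w := by fun_prop
  set q : ℝ → ℝ → ℝ := fun r z ↦ gaussianPDFReal (a * r ^ 2) (Real.toNNReal ((b * r) ^ 2)) z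
  have hjoint : Measurable fun p : ℝ × ℝ ↦
      ENNReal.ofReal (p.1 ^ (N - 1) * w p.1 * q p.1 p.2) :=
    ((by fun_prop : Measurable fun p : ℝ × ℝ ↦ p.1 ^ (N - 1) * w p.1).mul hpdf).ennreal_ofReal
  refine Measure.ext_of_lintegral _ fun g hg ↦ ?_
  have hF : Measurable fun r : ℝ ↦ ENNReal.ofReal (w r) *
      ∫⁻ z, ENNReal.ofReal (q r z) * g z := by
    refine Measurable.mul (by fun_prop) (Measurable.lintegral_prod_right (f := fun r z ↦
      ENNReal.ofReal (q r z) * g z) ?_)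
    exact (hpdf.ennreal_ofReal).mul (hg.comp measurable_snd)
  calc
    _ = ∫⁻ x, ∫⁻ z, g z ∂gaussianReal (a * ‖x‖ ^ 2) ((‖b‖₊ * ‖x‖₊) ^ 2)
        ∂stdGaussian (EuclideanSpace ℝ ι) := by
      rw [lintegral_map hg (by fun_prop), lintegral_prod_stdGaussian_norm_sq_add_inner a b hg]
    _ = ∫⁻ x : EuclideanSpace ℝ ι, ENNReal.ofReal (w ‖x‖) *
        ∫⁻ z, ENNReal.ofReal (q ‖x‖ z) * g z := by
      rw [stdGaussian_eq_withDensity, lintegral_withDensity_eq_lintegral_mul_non_measurable _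
        (by fun_prop) (.of_forall fun x ↦ ENNReal.ofReal_lt_top)]
      refine lintegral_congr_ae ?_
      filter_upwards [Measure.ae_ne volume (0 : EuclideanSpace ℝ ι)] with x hx
      have hv : (‖b‖₊ * ‖x‖₊) ^ 2 = Real.toNNReal ((b * ‖x‖) ^ 2) := by
        ext
        simp [abs_of_pos hb, sq_nonneg]
      have hv0 : Real.toNNReal ((b * ‖x‖) ^ 2) ≠ 0 := (Real.toNNReal_pos.2 (by positivity)).ne'
      rw [Pi.mul_apply, hv, gaussianReal_of_var_ne_zero _ hv0,
        lintegral_withDensity_eq_lintegral_mul _ (measurable_gaussianPDF _ _) hg]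
      rfl
    _ = ENNReal.ofReal (N * (√Real.pi ^ N / Real.Gamma (N / 2 + 1))) *
        ∫⁻ r in Set.Ioi (0 : ℝ), ENNReal.ofReal (r ^ (N - 1)) *
          (ENNReal.ofReal (w r) * ∫⁻ z, ENNReal.ofReal (q r z) * g z) := by
      rw [lintegral_fun_norm_addHaar _ hF, hball, finrank_euclideanSpace]
    _ = ENNReal.ofReal (N * (√Real.pi ^ N / Real.Gamma (N / 2 + 1))) *
        ∫⁻ z, (∫⁻ r in Set.Ioi (0 : ℝ), ENNReal.ofReal (r ^ (N - 1) * w r * q r z)) * g z := by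
      congr 1
      calc
        _ = ∫⁻ r in Set.Ioi (0 : ℝ), ∫⁻ z,
            ENNReal.ofReal (r ^ (N - 1) * w r * q r z) * g z := by
          refine setLIntegral_congr_fun measurableSet_Ioi fun r (hr : 0 < r) ↦ ?_
          rw [← mul_assoc, ← ENNReal.ofReal_mul (by positivity),
            ← lintegral_const_mul' _ _ ENNReal.ofReal_ne_top]
          refine lintegral_congr fun z ↦ ?_
          rw [ENNReal.ofReal_mul (p := r ^ (N - 1) * w r) (by positivity), mul_assoc]
        _ = _ := by
          rw [lintegral_lintegral_swap (hjoint.mul (hg.comp measurable_snd)).aemeasurable]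
          refine lintegral_congr fun z ↦ ?_
          exact lintegral_mul_const _ (hjoint.comp measurable_prodMk_right)
    _ = _ := by
      have hdens : Measurable fun z ↦
          ∫⁻ r in Set.Ioi (0 : ℝ), ENNReal.ofReal (r ^ (N - 1) * w r * q r z) := by
        exact Measurable.lintegral_prod_left (f := fun r z ↦
          ENNReal.ofReal (r ^ (N - 1) * w r * q r z)) hjoint
      rw [lintegral_withDensity_eq_lintegral_mul _ (hdens.const_mul _) hg,
        ← lintegral_const_mul' _ _ ENNReal.ofReal_ne_top]
      refine lintegral_congr fun z ↦ ?_
      simp only [Pi.mul_apply, mul_assoc]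

theorem Real.sq_div_four_le_cosh (t : ℝ) : t ^ 2 / 4 ≤ Real.cosh t := by
  have hexp := Real.quadratic_le_exp_of_nonneg (abs_nonneg t)
  rw [← Real.cosh_abs, Real.cosh_eq]
  nlinarith [abs_nonneg t, sq_abs t, Real.exp_pos (-|t|)]

theorem integrable_exp_neg_mul_cosh_mul_exp (ν : ℝ) {y : ℝ} (hy : 0 < y) :
    Integrable fun t : ℝ ↦ Real.exp (-(y * Real.cosh t)) * Real.exp (ν * t) := by
  refine ((integrable_exp_neg_mul_sq (show 0 < y / 8 by positivity)).const_mul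
    (Real.exp (2 * ν ^ 2 / y))).mono' (by fun_prop) (.of_forall fun t ↦ ?_)
  rw [Real.norm_of_nonneg (by positivity), ← Real.exp_add, ← Real.exp_add]
  refine Real.exp_le_exp.2 ?_
  have hcosh := mul_le_mul_of_nonneg_left (Real.sq_div_four_le_cosh t) hy.le
  have hsq : 2 * ν ^ 2 / y + y / 8 * t ^ 2 - ν * t = 2 / y * (ν - y * t / 4) ^ 2 := by
    field_simp
    ring
  have hnonneg : 0 ≤ 2 / y * (ν - y * t / 4) ^ 2 := by positivity
  linarith

/-- The integral representation of `besselK` over the whole line. -/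
theorem integral_exp_neg_mul_cosh_mul_exp (ν : ℝ) {y : ℝ} (hy : 0 < y) :
    ∫ t : ℝ, Real.exp (-(y * Real.cosh t)) * Real.exp (ν * t) = 2 * besselK ν y := by
  have hpos := integrable_exp_neg_mul_cosh_mul_exp ν hy
  have hneg := integrable_exp_neg_mul_cosh_mul_exp (-ν) hy
  have hreflect : ∫ t in Set.Iic (0 : ℝ), Real.exp (-(y * Real.cosh t)) * Real.exp (ν * t) =
      ∫ t in Set.Ioi (0 : ℝ), Real.exp (-(y * Real.cosh t)) * Real.exp (-ν * t) := by
    have h := integral_comp_neg_Iic (0 : ℝ)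
      fun t ↦ Real.exp (-(y * Real.cosh t)) * Real.exp (-ν * t)
    simpa using h
  rw [← intervalIntegral.integral_Iic_add_Ioi hpos.integrableOn hpos.integrableOn, hreflect,
    ← integral_add hneg.integrableOn hpos.integrableOn, besselK, ← integral_const_mul]
  refine integral_congr_ae (.of_forall fun t ↦ ?_)
  simp only [Real.cosh_eq (ν * t)]
  ring_nf

theorem Real.range_mul_exp_half {s : ℝ} (hs : 0 < s) :
    Set.range (fun t : ℝ ↦ s * Real.exp (t / 2)) = Set.Ioi 0 := by
  ext r
  refine ⟨?_, fun hr ↦ ⟨2 * Real.log (r / s), ?_⟩⟩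
  · rintro ⟨t, rfl⟩
    exact mul_pos hs (Real.exp_pos _)
  · have hrs : 0 < r / s := div_pos hr hs
    simp only [mul_div_cancel_left₀ _ (two_ne_zero' ℝ), Real.exp_log hrs]
    field_simp

/-- The modified Bessel function as the normalization of a generalized inverse Gaussian law. -/
theorem lintegral_rpow_mul_exp_eq_besselK (ν : ℝ) {β y : ℝ} (hβ : 0 < β) (hy : 0 < y) :
    ∫⁻ r in Set.Ioi (0 : ℝ), ENNReal.ofReal
        (r ^ (2 * ν - 1) * Real.exp (-(β / 2 * (r ^ 2 + y ^ 2 / r ^ 2)))) =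
      ENNReal.ofReal (y ^ ν * besselK ν (β * y)) := by
  have hsqrt : 0 < √y := Real.sqrt_pos.2 hy
  have hderiv (t : ℝ) : HasDerivAt (fun t : ℝ ↦ √y * Real.exp (t / 2))
      (√y * (Real.exp (t / 2) * (1 / 2))) t :=
    (((hasDerivAt_id t).div_const 2).exp).const_mul _
  have hinj : Function.Injective fun t : ℝ ↦ √y * Real.exp (t / 2) := by
    intro t u htu
    have := Real.exp_injective (mul_left_cancel₀ hsqrt.ne' htu)
    linarith
  have hpoint (t : ℝ) : |√y * (Real.exp (t / 2) * (1 / 2))| *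
      ((√y * Real.exp (t / 2)) ^ (2 * ν - 1) * Real.exp (-(β / 2 *
        ((√y * Real.exp (t / 2)) ^ 2 + y ^ 2 / (√y * Real.exp (t / 2)) ^ 2)))) =
      y ^ ν / 2 * (Real.exp (-(β * y * Real.cosh t)) * Real.exp (ν * t)) := by
    have hr : 0 < √y * Real.exp (t / 2) := by positivity
    have hsq : (√y * Real.exp (t / 2)) ^ 2 = y * Real.exp t := by
      rw [mul_pow, Real.sq_sqrt hy.le, ← Real.exp_nat_mul]
      congr 2
      push_cast
      ring
    have hpow : (√y * Real.exp (t / 2)) * (√y * Real.exp (t / 2)) ^ (2 * ν - 1) =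
        y ^ ν * Real.exp (ν * t) := by
      rw [Real.rpow_sub_one hr.ne', mul_div_cancel₀ _ hr.ne', Real.rpow_mul hr.le,
        Real.rpow_two, hsq, Real.mul_rpow hy.le (Real.exp_pos t).le, ← Real.exp_mul, mul_comm t]
    have hexp : -(β / 2 * (y * Real.exp t + y ^ 2 / (y * Real.exp t))) =
        -(β * y * Real.cosh t) := by
      rw [Real.cosh_eq, Real.exp_neg]
      field_simp
    rw [abs_of_pos (by positivity), hsq, hexp]
    linear_combination (Real.exp (-(β * y * Real.cosh t)) / 2) * hpow
  rw [← Real.range_mul_exp_half hsqrt, ← Set.image_univ,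
    lintegral_image_eq_lintegral_abs_deriv_mul MeasurableSet.univ
      (fun t _ ↦ (hderiv t).hasDerivWithinAt) hinj.injOn, Measure.restrict_univ]
  simp_rw [← ENNReal.ofReal_mul (abs_nonneg _), hpoint]
  rw [← ofReal_integral_eq_lintegral_ofReal
    ((integrable_exp_neg_mul_cosh_mul_exp ν (mul_pos hβ hy)).const_mul _)
    (.of_forall fun t ↦ by positivity), integral_const_mul,
    integral_exp_neg_mul_cosh_mul_exp ν (mul_pos hβ hy)]
  ring_nf

/-- The mixture density of `map_prod_stdGaussian_norm_sq_add_inner` in closed form. -/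
theorem lintegral_gaussian_mixture_eq_besselK {ρ κ x : ℝ} (hρ : 0 < 1 - ρ ^ 2) (hκ : 0 < κ)
    (hx : x ≠ 0) {n : ℕ} (hn : 1 ≤ n) :
    ∫⁻ r in Set.Ioi (0 : ℝ), ENNReal.ofReal (r ^ (n - 1) *
        ((√(2 * Real.pi))⁻¹ ^ n * Real.exp (-r ^ 2 / 2)) *
        gaussianPDFReal (κ * ρ * r ^ 2) (Real.toNNReal ((κ * √(1 - ρ ^ 2) * r) ^ 2)) x) =
      ENNReal.ofReal ((√(2 * Real.pi))⁻¹ ^ n * (√(2 * Real.pi) * κ * √(1 - ρ ^ 2))⁻¹ *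
        Real.exp (ρ * x / (κ * (1 - ρ ^ 2))) *
        ((|x| / κ) ^ (((n : ℝ) - 1) / 2) *
          besselK (((n : ℝ) - 1) / 2) (1 / (1 - ρ ^ 2) * (|x| / κ)))) := by
  have hc : 0 < √(1 - ρ ^ 2) := Real.sqrt_pos.2 hρ
  have hc2 : √(1 - ρ ^ 2) ^ 2 = 1 - ρ ^ 2 := Real.sq_sqrt hρ.le
  rw [ENNReal.ofReal_mul (by positivity),
    ← lintegral_rpow_mul_exp_eq_besselK _ (by positivity) (by positivity),
    ← lintegral_const_mul' _ _ ENNReal.ofReal_ne_top]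
  refine setLIntegral_congr_fun measurableSet_Ioi fun r (hr : 0 < r) ↦ ?_
  rw [← ENNReal.ofReal_mul (by positivity)]
  congr 1
  have hpow : r ^ (n - 1) = r * r ^ (2 * (((n : ℝ) - 1) / 2) - 1) := by
    rw [Real.rpow_sub_one hr.ne', mul_div_cancel₀ _ hr.ne', mul_div_cancel₀ _ (two_ne_zero' ℝ),
      ← Nat.cast_pred hn, Real.rpow_natCast]
  have hvar : √(2 * Real.pi * (κ * √(1 - ρ ^ 2) * r) ^ 2) =
      √(2 * Real.pi) * (κ * √(1 - ρ ^ 2) * r) := by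
    rw [Real.sqrt_mul (by positivity), Real.sqrt_sq (by positivity)]
  have hexp : -r ^ 2 / 2 +
      -(x - κ * ρ * r ^ 2) ^ 2 / (2 * (κ * √(1 - ρ ^ 2) * r) ^ 2) =
      ρ * x / (κ * (1 - ρ ^ 2)) +
        -(1 / (1 - ρ ^ 2) / 2 * (r ^ 2 + (|x| / κ) ^ 2 / r ^ 2)) := by
    rw [mul_pow, mul_pow, hc2, div_pow, sq_abs]
    field_simp
    ring
  rw [gaussianPDFReal, Real.coe_toNNReal _ (sq_nonneg _), hvar, hpow]
  have hexp' := congrArg Real.exp hexp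
  rw [Real.exp_add, Real.exp_add] at hexp'
  calc
    _ = r ^ (2 * (((n : ℝ) - 1) / 2) - 1) * (√(2 * Real.pi))⁻¹ ^ n *
        (√(2 * Real.pi) * κ * √(1 - ρ ^ 2))⁻¹ * (Real.exp (-r ^ 2 / 2) *
        Real.exp (-(x - κ * ρ * r ^ 2) ^ 2 / (2 * (κ * √(1 - ρ ^ 2) * r) ^ 2))) := by
      field_simp
    _ = _ := by
      rw [hexp']
      ring

/-- Simplification of the normalizing constant. -/
theorem mixture_constant_eq {s c : ℝ} (hs : 0 < s) (hc : 0 < c) (x : ℝ) {n : ℕ} (hn : 1 ≤ n) :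
    n * (√Real.pi ^ n / Real.Gamma ((n : ℝ) / 2 + 1)) *
        ((√(2 * Real.pi))⁻¹ ^ n * (√(2 * Real.pi) * (s / n) * √c)⁻¹ *
          (|x| / (s / n)) ^ (((n : ℝ) - 1) / 2)) =
      (n : ℝ) ^ (((n : ℝ) + 1) / 2) * 2 ^ ((1 - (n : ℝ)) / 2) * |x| ^ (((n : ℝ) - 1) / 2) /
        (s ^ (((n : ℝ) + 1) / 2) * √(Real.pi * c) * Real.Gamma ((n : ℝ) / 2)) := by
  have hn0 : (0 : ℝ) < n := by exact_mod_cast hn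
  have hΓ : 0 < Real.Gamma ((n : ℝ) / 2) := Real.Gamma_pos_of_pos (by positivity)
  have hadd : ((n : ℝ) + 1) / 2 = ((n : ℝ) - 1) / 2 + 1 := by ring
  have htwo : (2 : ℝ) ^ ((1 - (n : ℝ)) / 2) = 2 * (√2)⁻¹ ^ (n + 1) := by
    rw [Real.sqrt_eq_rpow, ← Real.rpow_neg (by norm_num), ← Real.rpow_natCast,
      ← Real.rpow_mul (by norm_num)]
    rw [mul_comm, ← Real.rpow_add_one (by norm_num)]
    congr 1
    push_cast
    ring
  rw [Real.Gamma_add_one (by positivity), hadd, Real.rpow_add_one hn0.ne',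
    Real.rpow_add_one hs.ne', htwo, Real.sqrt_mul (by norm_num), Real.sqrt_mul Real.pi_pos.le,
    div_div_eq_mul_div, Real.div_rpow (by positivity) hs.le,
    Real.mul_rpow (abs_nonneg x) hn0.le]
  simp only [inv_pow, mul_pow, pow_succ]
  field_simp

/-- Independent standard normal coordinates form two independent standard Gaussian vectors. -/
theorem map_toLp_inl_inr_eq_prod_stdGaussian {Ω ι κ : Type*} [Fintype ι] [Fintype κ]
    [MeasurableSpace Ω] (P : Measure Ω) [IsProbabilityMeasure P] (U : ι ⊕ κ → Ω → ℝ)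
    (hmeas : ∀ i, Measurable (U i)) (hUlaw : ∀ i, P.map (U i) = gaussianReal 0 1)
    (hindep : iIndepFun U P) :
    P.map (fun ω ↦ (WithLp.toLp 2 fun i ↦ U (Sum.inl i) ω, WithLp.toLp 2 fun j ↦ U (Sum.inr j) ω)) =
      (stdGaussian (EuclideanSpace ℝ ι)).prod (stdGaussian (EuclideanSpace ℝ κ)) := by
  have hpi : P.map (fun ω i ↦ U i ω) = Measure.pi fun _ ↦ gaussianReal 0 1 := by
    rw [(iIndepFun_iff_map_fun_eq_pi_map fun i ↦ (hmeas i).aemeasurable).1 hindep]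
    simp_rw [hUlaw]
  have hsplit := (measurePreserving_sumPiEquivProdPi
    (fun _ : ι ⊕ κ ↦ gaussianReal 0 1)).map_eq
  rw [← hpi, Measure.map_map (by fun_prop) (by fun_prop)] at hsplit
  rw [← map_pi_eq_stdGaussian, ← map_pi_eq_stdGaussian,
    Measure.map_prod_map _ _ (by fun_prop) (by fun_prop), ← hsplit,
    Measure.map_map (by fun_prop) (by fun_prop)]
  rfl

/-- Formula (1), the main result of Nadarajah and Pogány: with `Xᵢ, Vᵢ` (`i = 1, …, n`)
mutually independent standard normals, `Yᵢ = ρXᵢ + √(1 − ρ²)Vᵢ` and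
`Z̄ = (1/n) Σᵢ (σ_X Xᵢ)(σ_Y Yᵢ)`, the law of `Z̄` is absolutely continuous with respect to
Lebesgue measure, with density
`p(x) = n^{(n+1)/2} 2^{(1−n)/2} |x|^{(n−1)/2} / ((σ_X σ_Y)^{(n+1)/2} √(π(1 − ρ²)) Γ(n/2))
· e^{ρnx/(σ_X σ_Y(1 − ρ²))} K_{(n−1)/2}(n|x|/(σ_X σ_Y(1 − ρ²)))`. -/
theorem mean_product_correlated_normal_density
    {Ω : Type*} [MeasurableSpace Ω] (P : Measure Ω) [IsProbabilityMeasure P]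
    (ρ : ℝ) (hρ : ρ ∈ Set.Ioo (-1 : ℝ) 1)
    (σX σY : ℝ) (hσX : 0 < σX) (hσY : 0 < σY) (n : ℕ) (hn : 1 ≤ n)
    (U : (Fin n ⊕ Fin n) → Ω → ℝ) (hmeas : ∀ i, Measurable (U i))
    (hUlaw : ∀ i, P.map (U i) = gaussianReal 0 1)
    (hindep : iIndepFun U P)
    (X V : Fin n → Ω → ℝ)
    (hXdef : ∀ i, X i = U (Sum.inl i)) (hVdef : ∀ i, V i = U (Sum.inr i))
    (Y : Fin n → Ω → ℝ)
    (hY : ∀ i ω, Y i ω = ρ * X i ω + Real.sqrt (1 - ρ ^ 2) * V i ω)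
    (Zbar : Ω → ℝ)
    (hZbar : ∀ ω, Zbar ω = (1 / n) * ∑ i, (σX * X i ω) * (σY * Y i ω)) :
    P.map Zbar = volume.withDensity (fun x => ENNReal.ofReal
      ((n : ℝ) ^ (((n : ℝ) + 1) / 2) * 2 ^ ((1 - (n : ℝ)) / 2) * |x| ^ (((n : ℝ) - 1) / 2) /
          ((σX * σY) ^ (((n : ℝ) + 1) / 2) * Real.sqrt (Real.pi * (1 - ρ ^ 2)) *
            Real.Gamma ((n : ℝ) / 2)) *
        Real.exp (ρ * n * x / (σX * σY * (1 - ρ ^ 2))) *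
        besselK (((n : ℝ) - 1) / 2) (n * |x| / (σX * σY * (1 - ρ ^ 2))))) := by
  have hρ2 : 0 < 1 - ρ ^ 2 := by nlinarith [hρ.1, hρ.2]
  have hs : 0 < σX * σY := mul_pos hσX hσY
  have hn0 : (0 : ℝ) < n := by exact_mod_cast hn
  have hκ : 0 < σX * σY / n := by positivity
  have : Nonempty (Fin n) := ⟨⟨0, hn⟩⟩
  have hZ : Zbar = (fun p : EuclideanSpace ℝ (Fin n) × EuclideanSpace ℝ (Fin n) ↦
      σX * σY / n * ρ * ‖p.1‖ ^ 2 + σX * σY / n * √(1 - ρ ^ 2) * inner ℝ p.1 p.2) ∘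
      (fun ω ↦ (WithLp.toLp 2 fun i ↦ U (Sum.inl i) ω,
        WithLp.toLp 2 fun j ↦ U (Sum.inr j) ω)) := by
    ext ω
    simp only [hZbar, hY, hXdef, hVdef, Function.comp_apply, EuclideanSpace.real_norm_sq_eq,
      PiLp.inner_apply, Finset.mul_sum, ← Finset.sum_add_distrib]
    refine Finset.sum_congr rfl fun i _ ↦ ?_
    simp
    ring
  rw [hZ, ← Measure.map_map (by fun_prop) (by fun_prop),
    map_toLp_inl_inr_eq_prod_stdGaussian P U hmeas hUlaw hindep,
    map_prod_stdGaussian_norm_sq_add_inner (Fin n) _ (by positivity)]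
  refine withDensity_congr_ae ?_
  filter_upwards [Measure.ae_ne volume (0 : ℝ)] with x hx
  rw [Fintype.card_fin, lintegral_gaussian_mixture_eq_besselK hρ2 hκ hx hn,
    ← ENNReal.ofReal_mul (by positivity), ← mixture_constant_eq hs hρ2 x hn]
  have hexp : ρ * x / (σX * σY / n * (1 - ρ ^ 2)) = ρ * n * x / (σX * σY * (1 - ρ ^ 2)) := by
    field_simp
  have harg : 1 / (1 - ρ ^ 2) * (|x| / (σX * σY / n)) =
      n * |x| / (σX * σY * (1 - ρ ^ 2)) := by
    field_simp
  rw [hexp, harg]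
  congr 1
  ring
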